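/- If the pairs f = (u₁, v₁) and g = (u₂, v₂) on Ω are S-continuous, then their pointwise interval product f × g = (m, M), where m(x) = min{u₁(x)u₂(x), u₁(x)v₂(x), v₁(x)u₂(x), v₁(x)v₂(x)} and M(x) = max{u₁(x)u₂(x), u₁(x)v₂(x), v₁(x)u₂(x), v₁(x)v₂(x)}, is S-continuous. -/

import Mathlib

open Set

/-- Points of `ℝⁿ`. -/
abbrev Pt (n : ℕ) := EuclideanSpace ℝ (Fin n)

/-- Lower Baire operator `I(D,Ω,f)(x) = sup_{δ>0} inf { f y : y ∈ B_δ(x) ∩ D }`,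
where `B_δ(x) = { y ∈ Ω : ‖y - x‖ < δ }`. -/
noncomputable def Ilow {n : ℕ} (D Om : Set (Pt n)) (f : Pt n → ℝ) (x : Pt n) : ℝ :=
  sSup {a : ℝ | ∃ δ : ℝ, 0 < δ ∧
    a = sInf (f '' {y | y ∈ Om ∧ ‖y - x‖ < δ ∧ y ∈ D})}

/-- Upper Baire operator `S(D,Ω,f)(x) = inf_{δ>0} sup { f y : y ∈ B_δ(x) ∩ D }`. -/
noncomputable def Shigh {n : ℕ} (D Om : Set (Pt n)) (f : Pt n → ℝ) (x : Pt n) : ℝ :=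
  sInf {a : ℝ | ∃ δ : ℝ, 0 < δ ∧
    a = sSup (f '' {y | y ∈ Om ∧ ‖y - x‖ < δ ∧ y ∈ D})}

/-- `f`, defined on `D ⊆ Ω`, is locally bounded relative to `Ω`. -/
def LocBddOn {n : ℕ} (Om D : Set (Pt n)) (f : Pt n → ℝ) : Prop :=
  ∀ x ∈ Om, ∃ δ : ℝ, 0 < δ ∧ ∃ M : ℝ,
    ∀ y, y ∈ Om → ‖y - x‖ < δ → y ∈ D → |f y| < M

/-- `(u, v)` encodes an interval-valued function `x ↦ [u x, v x]` on `Om`. -/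
def IntervalPair {n : ℕ} (Om : Set (Pt n)) (u v : Pt n → ℝ) : Prop :=
  LocBddOn Om Om u ∧ LocBddOn Om Om v ∧ ∀ x ∈ Om, u x ≤ v x

/-- The pair `(u, v)` is S-continuous on `Om`: `I(u) = u` and `S(v) = v`. -/
def SCont {n : ℕ} (Om : Set (Pt n)) (u v : Pt n → ℝ) : Prop :=
  ∀ x ∈ Om, Ilow Om Om u x = u x ∧ Shigh Om Om v x = v x

/-- The pair `(u, v)` is Hausdorff continuous on `Om`. -/
def HCont {n : ℕ} (Om : Set (Pt n)) (u v : Pt n → ℝ) : Prop :=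
  ∀ p q : Pt n → ℝ, LocBddOn Om Om p → LocBddOn Om Om q →
    (∀ x ∈ Om, u x ≤ p x ∧ p x ≤ q x ∧ q x ≤ v x) →
    ∀ x ∈ Om, Ilow Om Om p x = u x ∧ Shigh Om Om q x = v x

/-- `(u, v)` is an H-continuous interval pair on `Om`. -/
def HContPair {n : ℕ} (Om : Set (Pt n)) (u v : Pt n → ℝ) : Prop :=
  IntervalPair Om u v ∧ HCont Om u v

/-- Lower endpoint of the pointwise interval product. -/
noncomputable def imin {n : ℕ} (u₁ v₁ u₂ v₂ : Pt n → ℝ) (x : Pt n) : ℝ :=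
  min (min (u₁ x * u₂ x) (u₁ x * v₂ x)) (min (v₁ x * u₂ x) (v₁ x * v₂ x))

/-- Upper endpoint of the pointwise interval product. -/
noncomputable def imax {n : ℕ} (u₁ v₁ u₂ v₂ : Pt n → ℝ) (x : Pt n) : ℝ :=
  max (max (u₁ x * u₂ x) (u₁ x * v₂ x)) (max (v₁ x * u₂ x) (v₁ x * v₂ x))

/-- `(pl, pu)` is the H-continuous pair contained pointwise in the interval sum of
`(u₁, v₁)` and `(u₂, v₂)`, i.e. `(pl, pu) = (u₁,v₁) ⊕ (u₂,v₂)`. -/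
def IsOplus {n : ℕ} (Om : Set (Pt n)) (u₁ v₁ u₂ v₂ pl pu : Pt n → ℝ) : Prop :=
  HContPair Om pl pu ∧
    ∀ x ∈ Om, u₁ x + u₂ x ≤ pl x ∧ pl x ≤ pu x ∧ pu x ≤ v₁ x + v₂ x

/-- `(ql, qu)` is the H-continuous pair contained pointwise in the interval product of
`(u₁, v₁)` and `(u₂, v₂)`, i.e. `(ql, qu) = (u₁,v₁) ⊗ (u₂,v₂)`. -/
def IsOtimes {n : ℕ} (Om : Set (Pt n)) (u₁ v₁ u₂ v₂ ql qu : Pt n → ℝ) : Prop :=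
  HContPair Om ql qu ∧
    ∀ x ∈ Om, imin u₁ v₁ u₂ v₂ x ≤ ql x ∧ ql x ≤ qu x ∧ qu x ≤ imax u₁ v₁ u₂ v₂ x


def PP {n : ℕ} (Om : Set (Pt n)) (u : Pt n → ℝ) : Prop :=
  (∀ x ∈ Om, ∀ δ : ℝ, 0 < δ → ∃ c : ℝ, ∀ y ∈ Om, ‖y - x‖ < δ → c ≤ u y) ∧
  (∀ x ∈ Om, ∀ ε : ℝ, 0 < ε → ∃ δ : ℝ, 0 < δ ∧ ∀ y ∈ Om, ‖y - x‖ < δ → u x - ε ≤ u y)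

lemma Shigh_eq {n : ℕ} (D Om : Set (Pt n)) (f : Pt n → ℝ) (x : Pt n) :
    Shigh D Om f x = - Ilow D Om (fun y => - f y) x := by
  unfold Shigh Ilow
  rw [Real.sInf_def]
  congr 2
  ext a
  simp only [Set.mem_neg, Set.mem_ofPred_eq]
  refine exists_congr fun δ => and_congr_right fun _ => ?_
  have : (fun y => - f y) '' {y | y ∈ Om ∧ ‖y - x‖ < δ ∧ y ∈ D}
      = - (f '' {y | y ∈ Om ∧ ‖y - x‖ < δ ∧ y ∈ D}) := by
    rw [← Set.image_neg_eq_neg, Set.image_image]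
  rw [this, Real.sInf_def, neg_neg]
  constructor <;> intro h <;> linarith

lemma inf_le_aux {n : ℕ} (Om : Set (Pt n)) (u : Pt n → ℝ) (x : Pt n) (hx : x ∈ Om) (δ : ℝ)
    (hδ : 0 < δ) : sInf (u '' {y | y ∈ Om ∧ ‖y - x‖ < δ ∧ y ∈ Om}) ≤ max (u x) 0 := by
  by_cases hb : BddBelow (u '' {y | y ∈ Om ∧ ‖y - x‖ < δ ∧ y ∈ Om})
  · exact (csInf_le hb ⟨x, ⟨hx, by simpa using hδ, hx⟩, rfl⟩).trans (le_max_left _ _)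
  · rw [Real.sInf_of_not_bddBelow hb]; exact le_max_right _ _

lemma bdd_aux {n : ℕ} (Om : Set (Pt n)) (u : Pt n → ℝ) (x : Pt n) (hx : x ∈ Om) :
    BddAbove {a : ℝ | ∃ δ : ℝ, 0 < δ ∧
    a = sInf (u '' {y | y ∈ Om ∧ ‖y - x‖ < δ ∧ y ∈ Om})} := by
  refine ⟨max (u x) 0, ?_⟩
  rintro a ⟨δ, hδ, rfl⟩
  exact inf_le_aux Om u x hx δ hδ

lemma PP_of {n : ℕ} (Om : Set (Pt n)) (u : Pt n → ℝ)
    (h : ∀ x ∈ Om, Ilow Om Om u x = u x) : PP Om u := by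
  have hB : ∀ x ∈ Om, ∀ δ : ℝ, 0 < δ → ∃ c : ℝ, ∀ y ∈ Om, ‖y - x‖ < δ → c ≤ u y := by
    intro x hx δ hδ
    by_contra! hc
    have h0 : ∀ z ∈ Om, 0 ≤ u z := by
      intro z hz
      rw [← h z hz]
      refine le_csSup (bdd_aux Om u z hz) ⟨δ + ‖x - z‖, by positivity, ?_⟩
      rw [Real.sInf_of_not_bddBelow]
      rintro ⟨c, hc'⟩
      obtain ⟨y, hy, hyx, hyc⟩ := hc c
      have := hc' ⟨y, ⟨hy, ?_, hy⟩, rfl⟩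
      · linarith
      · have := norm_sub_le_norm_sub_add_norm_sub y x z
        linarith
    obtain ⟨y, hy, _, hyc⟩ := hc 0
    linarith [h0 y hy]
  refine ⟨hB, ?_⟩
  intro x hx ε hε
  have h1 : u x - ε < Ilow Om Om u x := by rw [h x hx]; linarith
  unfold Ilow at h1
  obtain ⟨a, ⟨δ, hδ, rfl⟩, ha⟩ := exists_lt_of_lt_csSup (by exact ⟨_, 1, one_pos, rfl⟩) h1
  refine ⟨δ, hδ, fun y hy hyx => ha.le.trans (csInf_le ?_ ⟨y, ⟨hy, hyx, hy⟩, rfl⟩)⟩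
  obtain ⟨c, hc⟩ := hB x hx δ hδ
  refine ⟨c, ?_⟩
  rintro _ ⟨y, hy, rfl⟩
  exact hc y hy.1 hy.2.1

lemma of_PP {n : ℕ} (Om : Set (Pt n)) (u : Pt n → ℝ) (h : PP Om u) :
    ∀ x ∈ Om, Ilow Om Om u x = u x := by
  intro x hx
  apply le_antisymm
  · refine csSup_le ⟨_, 1, one_pos, rfl⟩ ?_
    rintro _ ⟨δ, hδ, rfl⟩
    refine csInf_le ?_ ⟨x, ⟨hx, by simpa using hδ, hx⟩, rfl⟩
    obtain ⟨c, hc⟩ := h.1 x hx δ hδ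
    refine ⟨c, ?_⟩
    rintro _ ⟨y, hy, rfl⟩
    exact hc y hy.1 hy.2.1
  · refine le_of_forall_sub_le fun ε hε => ?_
    obtain ⟨δ, hδ, hd⟩ := h.2 x hx ε hε
    refine le_trans ?_ (le_csSup (bdd_aux Om u x hx) ⟨δ, hδ, rfl⟩)
    refine le_csInf ⟨_, x, ⟨hx, by simpa using hδ, hx⟩, rfl⟩ ?_
    rintro _ ⟨y, hy, rfl⟩
    exact hd y hy.1 hy.2.1

def FF (p q r s : ℝ) : ℝ := min (min (p * r) (p * s)) (min (q * r) (q * s))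

lemma lin_aux (p a q b : ℝ) (h1 : p ≤ a) (h2 : a ≤ q) : min (p * b) (q * b) ≤ a * b := by
  rcases le_total 0 b with hb | hb
  · exact (min_le_left _ _).trans (mul_le_mul_of_nonneg_right h1 hb)
  · exact (min_le_right _ _).trans (mul_le_mul_of_nonpos_right h2 hb)

lemma FF_le (p q r s a b : ℝ) (h1 : p ≤ a) (h2 : a ≤ q) (h3 : r ≤ b) (h4 : b ≤ s) :
    FF p q r s ≤ a * b := by
  refine le_trans ?_ (lin_aux p a q b h1 h2)
  have e1 := lin_aux r b s p h3 h4
  have e2 := lin_aux r b s q h3 h4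
  rw [mul_comm r, mul_comm s, mul_comm b] at e1 e2
  exact min_le_min e1 e2

lemma FF_mono (p q r s p' q' r' s' : ℝ) (h1 : p ≤ p') (h : p' ≤ q') (h2 : q' ≤ q)
    (h3 : r ≤ r') (h' : r' ≤ s') (h4 : s' ≤ s) :
    FF p q r s ≤ FF p' q' r' s' := by
  refine le_min (le_min ?_ ?_) (le_min ?_ ?_) <;> apply FF_le <;> linarith

lemma PP_imin {n : ℕ} (Om : Set (Pt n)) (u₁ v₁ u₂ v₂ : Pt n → ℝ)
    (h1 : ∀ x ∈ Om, u₁ x ≤ v₁ x) (h2 : ∀ x ∈ Om, u₂ x ≤ v₂ x)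
    (a1 : PP Om u₁) (b1 : PP Om (fun x => - v₁ x))
    (a2 : PP Om u₂) (b2 : PP Om (fun x => - v₂ x)) : PP Om (imin u₁ v₁ u₂ v₂) := by
  constructor
  · intro x hx δ hδ
    obtain ⟨p, hp⟩ := a1.1 x hx δ hδ
    obtain ⟨q, hq⟩ := b1.1 x hx δ hδ
    obtain ⟨r, hr⟩ := a2.1 x hx δ hδ
    obtain ⟨s, hs⟩ := b2.1 x hx δ hδ
    refine ⟨FF p (-q) r (-s), fun y hy hyx => ?_⟩
    have := hp y hy hyx
    have := hq y hy hyx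
    have := hr y hy hyx
    have := hs y hy hyx
    exact FF_mono _ _ _ _ _ _ _ _ (by linarith) (h1 y hy) (by linarith) (by linarith)
      (h2 y hy) (by linarith)
  · intro x hx ε hε
    have hc : Continuous fun t : ℝ => FF (u₁ x - t) (v₁ x + t) (u₂ x - t) (v₂ x + t) := by
      unfold FF; fun_prop
    obtain ⟨η, hη, hηc⟩ := Metric.continuous_iff.1 hc 0 ε hε
    have hF := hηc (η / 2) (by rw [Real.dist_eq, sub_zero, abs_of_pos] <;> linarith)
    rw [Real.dist_eq] at hF
    have hF := (abs_lt.1 hF).1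
    simp only [sub_zero, add_zero] at hF
    obtain ⟨d1, hd1, k1⟩ := a1.2 x hx (η / 2) (by linarith)
    obtain ⟨d2, hd2, k2⟩ := b1.2 x hx (η / 2) (by linarith)
    obtain ⟨d3, hd3, k3⟩ := a2.2 x hx (η / 2) (by linarith)
    obtain ⟨d4, hd4, k4⟩ := b2.2 x hx (η / 2) (by linarith)
    refine ⟨min (min d1 d2) (min d3 d4), by positivity, fun y hy hyx => ?_⟩
    simp only [lt_min_iff] at hyx
    have := k1 y hy hyx.1.1
    have := k2 y hy hyx.1.2
    have := k3 y hy hyx.2.1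
    have := k4 y hy hyx.2.2
    have hm := FF_mono (u₁ x - η / 2) (v₁ x + η / 2) (u₂ x - η / 2) (v₂ x + η / 2)
      (u₁ y) (v₁ y) (u₂ y) (v₂ y) (by linarith) (h1 y hy) (by linarith) (by linarith)
      (h2 y hy) (by linarith)
    change FF (u₁ x) (v₁ x) (u₂ x) (v₂ x) - ε ≤ FF (u₁ y) (v₁ y) (u₂ y) (v₂ y)
    linarith

theorem stmt6 {n : ℕ} (Om : Set (Pt n)) (u₁ v₁ u₂ v₂ : Pt n → ℝ)
    (h₁ : IntervalPair Om u₁ v₁) (h₂ : IntervalPair Om u₂ v₂)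
    (s₁ : SCont Om u₁ v₁) (s₂ : SCont Om u₂ v₂) :
    SCont Om (imin u₁ v₁ u₂ v₂) (imax u₁ v₁ u₂ v₂) := by
  have a1 := PP_of Om u₁ fun x hx => (s₁ x hx).1
  have a2 := PP_of Om u₂ fun x hx => (s₂ x hx).1
  have b1 := PP_of Om (fun x => - v₁ x) fun x hx => by
    have := (s₁ x hx).2
    rw [Shigh_eq] at this
    linarith
  have b2 := PP_of Om (fun x => - v₂ x) fun x hx => by
    have := (s₂ x hx).2
    rw [Shigh_eq] at this
    linarith
  intro x hx
  refine ⟨of_PP Om _ (PP_imin Om u₁ v₁ u₂ v₂ h₁.2.2 h₂.2.2 a1 b1 a2 b2) x hx, ?_⟩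
  have key := of_PP Om _ (PP_imin Om (fun x => - v₁ x) (fun x => - u₁ x) u₂ v₂
    (fun x hx => neg_le_neg (h₁.2.2 x hx)) h₂.2.2 b1 (by simpa using a1) a2 b2) x hx
  have e : imin (fun x => - v₁ x) (fun x => - u₁ x) u₂ v₂
      = fun y => - imax u₁ v₁ u₂ v₂ y := by
    funext y
    simp only [imin, imax, neg_mul, min_neg_neg]
    rw [max_comm]
  rw [e] at key
  rw [Shigh_eq, key, neg_neg]
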